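/- arXiv:1805.02559 — 3 statements merged into one kernel-verified Lean document; each statement's English description precedes it below -/
import Mathlib

section
/- Let n ≥ 1 be an integer. In G = (ℤ/nℤ)² set g₀ = (1, 0), g₁ = (−1, −1), g_∞ = (0, 1) and h₀ = (1, 2), h₁ = (1, −1), h_∞ = (−2, −1). Then for all p ≠ q in {0, 1, ∞}, the intersection of the cyclic subgroup generated by g_p with the cyclic subgroup generated by h_q is the trivial subgroup {(0, 0)}. -/
/-- In `G = (ℤ/nℤ)²` with `g₀ = (1,0)`, `g₁ = (-1,-1)`, `g_∞ = (0,1)`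
and `h₀ = (1,2)`, `h₁ = (1,-1)`, `h_∞ = (-2,-1)` (indexed by `0, 1, 2` for the
branch points `0, 1, ∞`), for all `p ≠ q` the intersection `⟨g_p⟩ ⊓ ⟨h_q⟩` is trivial. -/
theorem stmt_2 (n : ℕ) (hn : 1 ≤ n)
    (g h : Fin 3 → ZMod n × ZMod n)
    (hg : g = ![(1, 0), (-1, -1), (0, 1)])
    (hh : h = ![(1, 2), (1, -1), (-2, -1)]) :
    ∀ p q : Fin 3, p ≠ q →
      AddSubgroup.zmultiples (g p) ⊓ AddSubgroup.zmultiples (h q) = ⊥ := by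
  subst hg hh
  intro p q hpq
  rw [eq_bot_iff]
  rintro ⟨x, y⟩ ⟨⟨a, ha⟩, ⟨b, hb⟩⟩
  rw [AddSubgroup.mem_bot, Prod.mk_eq_zero]
  fin_cases p <;> fin_cases q <;> first | exact absurd rfl hpq | skip
  all_goals
    simp [Prod.ext_iff] at ha hb
    obtain ⟨h1, h2⟩ := ha
    obtain ⟨h3, h4⟩ := hb
    constructor <;> grind
end

section
/- Let n ≥ 2 be an even integer and G = (ℤ/nℤ)². Set g₀ = (1, 0), g₁ = (−1, −1), g_∞ = (0, 1) and h₀ = (1, 2), h₁ = (1, −1), h_∞ = (−2, −1). For each p ∈ {0, 1, ∞}, consider the diagonal action of G on the product of coset spaces (G / ⟨g_p⟩) × (G / ⟨h_p⟩). This action has exactly two orbits, and the stabilizer of every point has order exactly 2. -/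
lemma aux_orbit {G : Type*} [AddCommGroup G] (A B : AddSubgroup G) (f : G →+ ZMod 2)
    (hf : Function.Surjective f) (hker : ∀ x, f x = 0 ↔ ∃ a ∈ A, ∃ b ∈ B, x = a + b) :
    Nat.card (AddAction.orbitRel.Quotient G ((G ⧸ A) × (G ⧸ B))) = 2 := by
  have hA : ∀ a ∈ A, f a = 0 := fun a ha => (hker a).2 ⟨a, ha, 0, B.zero_mem, by simp⟩
  have hB : ∀ b ∈ B, f b = 0 := fun b hb => (hker b).2 ⟨0, A.zero_mem, b, hb, by simp⟩
  let φ : (G ⧸ A) × (G ⧸ B) → ZMod 2 := fun x =>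
    QuotientAddGroup.lift A f hA x.1 - QuotientAddGroup.lift B f hB x.2
  have key : ∀ x y : (G ⧸ A) × (G ⧸ B),
      (AddAction.orbitRel G ((G ⧸ A) × (G ⧸ B))) x y ↔ φ x = φ y := by
    rintro ⟨x1, x2⟩ ⟨y1, y2⟩
    induction x1 using QuotientAddGroup.induction_on with | H x1 =>
    induction x2 using QuotientAddGroup.induction_on with | H x2 =>
    induction y1 using QuotientAddGroup.induction_on with | H y1 =>
    induction y2 using QuotientAddGroup.induction_on with | H y2 =>
    rw [AddAction.orbitRel_apply, AddAction.mem_orbit_iff]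
    change _ ↔ f x1 - f x2 = f y1 - f y2
    constructor
    · rintro ⟨c, hc⟩
      have h1 : ((c + y1 : G) : G ⧸ A) = x1 := congrArg Prod.fst hc
      have h2 : ((c + y2 : G) : G ⧸ B) = x2 := congrArg Prod.snd hc
      have e1 := hA _ (QuotientAddGroup.eq.1 h1)
      have e2 := hB _ (QuotientAddGroup.eq.1 h2)
      simp only [map_add, map_neg] at e1 e2
      linear_combination e1 - e2
    · intro h
      obtain ⟨a, ha, b, hb, hab⟩ := (hker ((x1 - y1) - (x2 - y2))).1 (by
        simp only [map_sub]; linear_combination h)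
      refine ⟨x1 - y1 - a, Prod.ext ?_ ?_⟩
      · change ((x1 - y1 - a + y1 : G) : G ⧸ A) = x1
        rw [QuotientAddGroup.eq]
        convert ha using 1; abel
      · change ((x1 - y1 - a + y2 : G) : G ⧸ B) = x2
        rw [QuotientAddGroup.eq]
        have : x1 = a + b + (x2 - y2) + y1 := by rw [← hab]; abel
        rw [this]
        convert B.neg_mem hb using 1; abel
  have e : AddAction.orbitRel.Quotient G ((G ⧸ A) × (G ⧸ B)) ≃ ZMod 2 := by
    refine Equiv.ofBijective (Quotient.lift φ fun x y h => (key x y).1 h) ⟨?_, ?_⟩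
    · intro x y
      induction x using Quotient.inductionOn
      induction y using Quotient.inductionOn
      intro h
      exact Quotient.sound ((key _ _).2 h)
    · intro z
      obtain ⟨w, rfl⟩ := hf z
      exact ⟨Quotient.mk _ ((w : G ⧸ A), ((0 : G) : G ⧸ B)), by
        change f w - f 0 = f w
        rw [map_zero, sub_zero]⟩
  rw [Nat.card_congr e]; simp

lemma aux_stab {G : Type*} [AddCommGroup G] (A B : AddSubgroup G) (t : G) (ht : t ≠ 0)
    (h : ∀ x, x ∈ A ∧ x ∈ B ↔ x = 0 ∨ x = t) (x : (G ⧸ A) × (G ⧸ B)) :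
    Nat.card (AddAction.stabilizer G x) = 2 := by
  have : (AddAction.stabilizer G x : Set G) = {0, t} := by
    ext c
    obtain ⟨x1, x2⟩ := x
    induction x1 using QuotientAddGroup.induction_on with | H x1 =>
    induction x2 using QuotientAddGroup.induction_on with | H x2 =>
    rw [SetLike.mem_coe, AddAction.mem_stabilizer_iff, Set.mem_insert_iff, Set.mem_singleton_iff,
      ← h c, Prod.ext_iff]
    change ((c + x1 : G) : G ⧸ A) = x1 ∧ ((c + x2 : G) : G ⧸ B) = x2 ↔ _
    rw [QuotientAddGroup.eq, QuotientAddGroup.eq]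
    have e : ∀ y : G, -(c + y) + y = -c := fun y => by abel
    rw [e, e, neg_mem_iff, neg_mem_iff]
  rw [← SetLike.coe_sort_coe, this, Nat.card_coe_set_eq, Set.ncard_pair ht.symm]

lemma aux_mem {n : ℕ} (a b x y : ZMod n) :
    (x, y) ∈ AddSubgroup.zmultiples (a, b) ↔ ∃ k : ZMod n, x = k * a ∧ y = k * b := by
  rw [AddSubgroup.mem_zmultiples_iff]
  constructor
  · rintro ⟨k, hk⟩
    rw [Prod.ext_iff] at hk
    exact ⟨k, by simpa using hk.1.symm, by simpa using hk.2.symm⟩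
  · rintro ⟨k, rfl, rfl⟩
    obtain ⟨k, rfl⟩ := ZMod.intCast_surjective k
    exact ⟨k, by ext <;> simp⟩

lemma aux_two {m : ℕ} (k : ZMod (m + m)) : 2 * k = 0 ↔ k = 0 ∨ k = (m : ZMod (m + m)) := by
  obtain ⟨k, rfl⟩ := ZMod.intCast_surjective k
  have e1 : (2 * (k : ZMod (m + m))) = ((2 * k : ℤ) : ZMod (m + m)) := by push_cast; rfl
  have e2 : (m : ZMod (m + m)) = ((m : ℤ) : ZMod (m + m)) := by push_cast; rfl
  rw [e1, e2, ZMod.intCast_zmod_eq_zero_iff_dvd , ZMod.intCast_zmod_eq_zero_iff_dvd, 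
    ZMod.intCast_eq_intCast_iff_dvd_sub]
  push_cast
  constructor
  · rintro ⟨c, hc⟩
    have hk : k = m * c := by linarith
    obtain ⟨d, hd⟩ | ⟨d, hd⟩ := Int.even_or_odd c
    · left; exact ⟨d, by rw [hk, hd]; ring⟩
    · right; exact ⟨-d, by rw [hk, hd]; ring⟩
  · rintro (⟨c, hc⟩ | ⟨c, hc⟩)
    · exact ⟨2 * c, by rw [hc]; ring⟩
    · exact ⟨1 - 2 * c, by linarith⟩

lemma aux_par {m : ℕ} (k : ZMod (m + m)) :
    ZMod.castHom (show 2 ∣ m + m by omega) (ZMod 2) k = 0 ↔ ∃ j, k = 2 * j := by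
  constructor
  · obtain ⟨k, rfl⟩ := ZMod.intCast_surjective k
    rw [map_intCast, ZMod.intCast_zmod_eq_zero_iff_dvd]
    rintro ⟨c, rfl⟩
    exact ⟨c, by push_cast; rfl⟩
  · rintro ⟨j, rfl⟩
    rw [map_mul, map_ofNat]
    have : (OfNat.ofNat 2 : ZMod 2) = 0 := by decide
    rw [this, zero_mul]


/-- For even `n ≥ 2` and `G = (ℤ/nℤ)²` with `g₀ = (1,0)`, `g₁ = (-1,-1)`,
`g_∞ = (0,1)` and `h₀ = (1,2)`, `h₁ = (1,-1)`, `h_∞ = (-2,-1)` (indexed by `0, 1, 2`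
for the branch points `0, 1, ∞`), the diagonal `G`-action on
`(G ⧸ ⟨g_p⟩) × (G ⧸ ⟨h_p⟩)` has exactly two orbits, and every point has
stabilizer of order exactly `2`. -/
theorem stmt_7 (n : ℕ) (hn : 2 ≤ n) (heven : Even n)
    (g h : Fin 3 → ZMod n × ZMod n)
    (hg : g = ![(1, 0), (-1, -1), (0, 1)])
    (hh : h = ![(1, 2), (1, -1), (-2, -1)]) :
    ∀ p : Fin 3,
      Nat.card (AddAction.orbitRel.Quotient (ZMod n × ZMod n)
        (((ZMod n × ZMod n) ⧸ AddSubgroup.zmultiples (g p)) ×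
          ((ZMod n × ZMod n) ⧸ AddSubgroup.zmultiples (h p)))) = 2 ∧
      ∀ x : ((ZMod n × ZMod n) ⧸ AddSubgroup.zmultiples (g p)) ×
            ((ZMod n × ZMod n) ⧸ AddSubgroup.zmultiples (h p)),
        Nat.card (AddAction.stabilizer (ZMod n × ZMod n) x) = 2 := by
  obtain ⟨m, rfl⟩ := heven
  have hm : (m : ZMod (m + m)) ≠ 0 := by
    intro h0
    rw [ZMod.natCast_eq_zero_iff] at h0
    have := Nat.le_of_dvd (by omega) h0
    omega
  have h2m : (2 : ZMod (m + m)) * m = 0 := aux_two _ |>.2 (Or.inr rfl)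
  let c := (ZMod.castHom (show 2 ∣ m + m by omega) (ZMod 2)).toAddMonoidHom
  have hc : ∀ k, c k = 0 ↔ ∃ j, k = 2 * j := fun k => aux_par k
  have hcs : Function.Surjective c := ZMod.castHom_surjective (show 2 ∣ m + m by omega)
  subst hg hh
  intro p
  fin_cases p
  · refine ⟨aux_orbit _ _ (c.comp (AddMonoidHom.snd _ _)) ?_ ?_,
      aux_stab _ _ ((m : ZMod (m + m)), 0) ?_ ?_⟩
    · intro z
      obtain ⟨w, rfl⟩ := hcs z
      exact ⟨(0, w), rfl⟩
    · rintro ⟨x, y⟩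
      change c y = 0 ↔ _
      rw [hc]
      constructor
      · rintro ⟨j, rfl⟩
        exact ⟨(x - j, 0), (aux_mem _ _ _ _).2 ⟨x - j, by ring, by ring⟩,
          (j, 2 * j), (aux_mem _ _ _ _).2 ⟨j, by ring, by ring⟩, by ext <;> simp⟩
      · rintro ⟨⟨a1, a2⟩, ha, ⟨b1, b2⟩, hb, hab⟩
        obtain ⟨k, rfl, rfl⟩ := (aux_mem _ _ _ _).1 ha
        obtain ⟨l, rfl, rfl⟩ := (aux_mem _ _ _ _).1 hb
        have h2 := congrArg Prod.snd hab
        simp only [Prod.snd_add] at h2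
        exact ⟨l, by rw [h2]; ring⟩
    · intro h0; exact hm (congrArg Prod.fst h0)
    · rintro ⟨x, y⟩
      have e1 : (x, y) ∈ AddSubgroup.zmultiples ((1, 0) : ZMod (m + m) × ZMod (m + m)) ∧
          (x, y) ∈ AddSubgroup.zmultiples ((1, 2) : ZMod (m + m) × ZMod (m + m)) ↔
          2 * x = 0 ∧ y = 0 := by
        rw [aux_mem, aux_mem]
        constructor
        · rintro ⟨⟨k, hk1, hk2⟩, ⟨l, hl1, hl2⟩⟩
          exact ⟨by linear_combination 2 * hl1 - hl2 + hk2, by linear_combination hk2⟩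
        · rintro ⟨hx, hy⟩
          exact ⟨⟨x, by ring, by rw [hy]; ring⟩, ⟨x, by ring, by linear_combination hy - hx⟩⟩
      refine e1.trans ?_
      rw [aux_two]
      simp only [Prod.ext_iff, Prod.fst_zero, Prod.snd_zero]
      tauto
  · refine ⟨aux_orbit _ _ (c.comp (AddMonoidHom.fst _ _ + AddMonoidHom.snd _ _)) ?_ ?_,
      aux_stab _ _ ((m : ZMod (m + m)), (m : ZMod (m + m))) ?_ ?_⟩
    · intro z
      obtain ⟨w, rfl⟩ := hcs z
      exact ⟨(0, w), by simp⟩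
    · rintro ⟨x, y⟩
      change c (x + y) = 0 ↔ _
      rw [hc]
      constructor
      · rintro ⟨j, hj⟩
        exact ⟨(j, j), (aux_mem _ _ _ _).2 ⟨-j, by ring, by ring⟩,
          (x - j, y - j), (aux_mem _ _ _ _).2 ⟨x - j, by ring, by linear_combination hj⟩,
          by ext <;> simp⟩
      · rintro ⟨⟨a1, a2⟩, ha, ⟨b1, b2⟩, hb, hab⟩
        obtain ⟨k, rfl, rfl⟩ := (aux_mem _ _ _ _).1 ha
        obtain ⟨l, rfl, rfl⟩ := (aux_mem _ _ _ _).1 hb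
        have h1 := congrArg Prod.fst hab
        have h2 := congrArg Prod.snd hab
        simp only [Prod.snd_add, Prod.fst_add] at h1 h2
        exact ⟨-k, by rw [h1, h2]; ring⟩
    · intro h0; exact hm (congrArg Prod.fst h0)
    · rintro ⟨x, y⟩
      have e1 : (x, y) ∈ AddSubgroup.zmultiples ((-1, -1) : ZMod (m + m) × ZMod (m + m)) ∧
          (x, y) ∈ AddSubgroup.zmultiples ((1, -1) : ZMod (m + m) × ZMod (m + m)) ↔
          2 * x = 0 ∧ y = x := by
        rw [aux_mem, aux_mem]
        constructor
        · rintro ⟨⟨k, hk1, hk2⟩, ⟨l, hl1, hl2⟩⟩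
          exact ⟨by linear_combination hl1 + hl2 + hk1 - hk2, by linear_combination hk2 - hk1⟩
        · rintro ⟨hx, hy⟩
          exact ⟨⟨-x, by ring, by rw [hy]; ring⟩, ⟨x, by ring, by linear_combination hy + hx⟩⟩
      refine e1.trans ?_
      rw [aux_two]
      simp only [Prod.ext_iff, Prod.fst_zero, Prod.snd_zero]
      constructor
      · rintro ⟨h | h, rfl⟩ <;> simp [h]
      · rintro (⟨rfl, rfl⟩ | ⟨rfl, rfl⟩) <;> simp
  · refine ⟨aux_orbit _ _ (c.comp (AddMonoidHom.fst _ _)) ?_ ?_,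
      aux_stab _ _ (0, (m : ZMod (m + m))) ?_ ?_⟩
    · intro z
      obtain ⟨w, rfl⟩ := hcs z
      exact ⟨(w, 0), rfl⟩
    · rintro ⟨x, y⟩
      change c x = 0 ↔ _
      rw [hc]
      constructor
      · rintro ⟨j, rfl⟩
        exact ⟨(0, y - j), (aux_mem _ _ _ _).2 ⟨y - j, by ring, by ring⟩,
          (2 * j, j), (aux_mem _ _ _ _).2 ⟨-j, by ring, by ring⟩, by ext <;> simp⟩
      · rintro ⟨⟨a1, a2⟩, ha, ⟨b1, b2⟩, hb, hab⟩
        obtain ⟨k, rfl, rfl⟩ := (aux_mem _ _ _ _).1 ha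
        obtain ⟨l, rfl, rfl⟩ := (aux_mem _ _ _ _).1 hb
        have h1 := congrArg Prod.fst hab
        simp only [Prod.fst_add] at h1
        exact ⟨-l, by rw [h1]; ring⟩
    · intro h0; exact hm (congrArg Prod.snd h0)
    · rintro ⟨x, y⟩
      have e1 : (x, y) ∈ AddSubgroup.zmultiples ((0, 1) : ZMod (m + m) × ZMod (m + m)) ∧
          (x, y) ∈ AddSubgroup.zmultiples ((-2, -1) : ZMod (m + m) × ZMod (m + m)) ↔
          2 * y = 0 ∧ x = 0 := by
        rw [aux_mem, aux_mem]
        constructor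
        · rintro ⟨⟨k, hk1, hk2⟩, ⟨l, hl1, hl2⟩⟩
          exact ⟨by linear_combination 2 * hl2 - hl1 + hk1, by linear_combination hk1⟩
        · rintro ⟨hy, hx⟩
          exact ⟨⟨y, by rw [hx]; ring, by ring⟩, ⟨-y, by linear_combination hx - hy, by ring⟩⟩
      refine e1.trans ?_
      rw [aux_two]
      simp only [Prod.ext_iff, Prod.fst_zero, Prod.snd_zero]
      tauto
end

section
/- Let n ≥ 8 be an integer with 3 ∤ n, and let ᵗA be the matrix over ℤ/nℤ with rows (1, 2), (−2, −1). Then for every (α, β) in the set {(2,1), (4,1), (1,3), (3,1), (1,2), (1,4)} and every (α', β') in the set {0,1}² ∪ {(0, n−1), (n−1, 0), (1, n−1), (n−1, 1), (1, n−2), (n−2, 1)}, one has (−α, −β) ≠ ᵗA·(α', β') in (ℤ/nℤ)². Equivalently, since ᵗA is invertible over ℤ/nℤ, ᵗA⁻¹·(−α, −β) is never congruent modulo n to any (α', β') in the latter set. -/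
theorem aux_small (n : ℕ) (hn : 8 ≤ n) (c : ℤ) (h1 : -8 < c) (h2 : c < 8)
    (h : (c : ZMod n) = 0) : c = 0 := by
  rw [ZMod.intCast_zmod_eq_zero_iff_dvd] at h
  exact Int.eq_zero_of_abs_lt_dvd h (by rw [abs_lt]; constructor <;> omega)

theorem aux_key (n : ℕ) (hn : 8 ≤ n) (a b p q : ℤ)
    (hx : -8 < p + 2 * q + a ∧ p + 2 * q + a < 8)
    (hy : -8 < -2 * p - q + b ∧ -2 * p - q + b < 8)
    (hne : ¬ (p + 2 * q + a = 0 ∧ -2 * p - q + b = 0))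
    (v w : ZMod n × ZMod n) (hv : v = ((a : ZMod n), (b : ZMod n)))
    (hw : w = ((p : ZMod n), (q : ZMod n))) :
    ![-v.1, -v.2] ≠ (!![1, 2; -2, -1] : Matrix (Fin 2) (Fin 2) (ZMod n)).mulVec ![w.1, w.2] := by
  subst hv hw
  intro h
  have h0 := congrFun h 0
  have h1 := congrFun h 1
  simp [Matrix.mulVec, dotProduct, Fin.sum_univ_two] at h0 h1
  refine hne ⟨aux_small n hn _ hx.1 hx.2 ?_, aux_small n hn _ hy.1 hy.2 ?_⟩
  · push_cast
    linear_combination -h0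
  · push_cast
    linear_combination -h1

/-- For `n ≥ 8` with `3 ∤ n` and `ᵗA = ((1, 2), (-2, -1))` over `ℤ/nℤ`,
for every `(α, β)` among the six chosen characters and every `(α', β')` among the ten
exceptional pairs, one has `(-α, -β) ≠ ᵗA · (α', β')` in `(ℤ/nℤ)²`. -/
theorem stmt_15 (n : ℕ) (hn : 8 ≤ n) (h3 : ¬ (3 ∣ n))
    (tA : Matrix (Fin 2) (Fin 2) (ZMod n))
    (htA : tA = !![1, 2; -2, -1]) :
    ∀ v ∈ ({(2, 1), (4, 1), (1, 3), (3, 1), (1, 2), (1, 4)} : Set (ZMod n × ZMod n)),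
    ∀ w ∈ ({(0, 0), (0, 1), (1, 0), (1, 1),
        (0, (n : ZMod n) - 1), ((n : ZMod n) - 1, 0),
        (1, (n : ZMod n) - 1), ((n : ZMod n) - 1, 1),
        (1, (n : ZMod n) - 2), ((n : ZMod n) - 2, 1)} : Set (ZMod n × ZMod n)),
      ![-v.1, -v.2] ≠ tA.mulVec ![w.1, w.2] := by
  subst htA
  intro v hv w hw
  have hv' : ∃ c ∈ ([(2, 1), (4, 1), (1, 3), (3, 1), (1, 2), (1, 4)] : List (ℤ × ℤ)),
      v = ((c.1 : ZMod n), (c.2 : ZMod n)) := by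
    simpa using hv
  have hw' : ∃ c ∈ ([(0, 0), (0, 1), (1, 0), (1, 1), (0, -1), (-1, 0), (1, -1), (-1, 1),
      (1, -2), (-2, 1)] : List (ℤ × ℤ)), w = ((c.1 : ZMod n), (c.2 : ZMod n)) := by
    simpa using hw
  obtain ⟨c, hc, hcv⟩ := hv'
  obtain ⟨d, hd, hdw⟩ := hw'
  have key : ∀ c ∈ ([(2, 1), (4, 1), (1, 3), (3, 1), (1, 2), (1, 4)] : List (ℤ × ℤ)),
      ∀ d ∈ ([(0, 0), (0, 1), (1, 0), (1, 1), (0, -1), (-1, 0), (1, -1), (-1, 1),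
      (1, -2), (-2, 1)] : List (ℤ × ℤ)),
      (-8 < d.1 + 2 * d.2 + c.1 ∧ d.1 + 2 * d.2 + c.1 < 8) ∧
      (-8 < -2 * d.1 - d.2 + c.2 ∧ -2 * d.1 - d.2 + c.2 < 8) ∧
      ¬ (d.1 + 2 * d.2 + c.1 = 0 ∧ -2 * d.1 - d.2 + c.2 = 0) := by
    decide
  obtain ⟨k1, k2, k3⟩ := key c hc d hd
  exact aux_key n hn c.1 c.2 d.1 d.2 k1 k2 k3 v w hcv hdw
end
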